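/- Let ξ be a nonzero real number and set γ = (|ξ| + √(ξ² + 4))/2. Then γ is the unique positive solution of γ = 1/γ + |ξ|, and consequently if X and ε are independent with X ~ Cauchy(0, γ) and ε ~ Cauchy(0, 1), then −1/X + ξ·ε has the same distribution as X, and E[log|X|] = log((|ξ| + √(ξ² + 4))/2). -/

import Mathlib

open Real MeasureTheory ProbabilityTheory

/-- The Cauchy distribution with location `x₀` and scale `γ`, given by its density
`x ↦ 1/(π·γ·(1 + ((x − x₀)/γ)^2))` with respect to Lebesgue measure. -/
noncomputable def cauchyDist (x₀ γ : ℝ) : Measure ℝ :=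
  volume.withDensity fun x =>
    ENNReal.ofReal (1 / (Real.pi * γ * (1 + ((x - x₀) / γ) ^ 2)))

/-!
The characteristic function `exp (i t x₀ - γ |t|)` of the Cauchy law, obtained by Fourier inversion
from the transform of the two-sided exponential, shows that independent sums add scales and that
multiplication by `ξ` multiplies the scale by `|ξ|`. The substitution `x ↦ 1 / x` inverts the scale
of a centred Cauchy law, so `X ↦ -1 / X + ξ ε` acts on scales by `γ ↦ 1 / γ + |ξ|`. At scale `1` the
law is invariant under inversion, which flips the sign of `log |x|`; hence its mean is `0` there,
and `log γ` at scale `γ`.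
-/

open scoped NNReal FourierTransform

lemma cauchyDist_eq_cauchyMeasure (x₀ : ℝ) {γ : ℝ≥0} (hγ : γ ≠ 0) :
    cauchyDist x₀ γ = cauchyMeasure x₀ γ := by
  rw [cauchyMeasure_of_scale_ne_zero x₀ hγ, cauchyDist]
  congr 1 with x
  rw [cauchyPDF_def, cauchyPDFReal_def', one_div, mul_inv, mul_inv, NNReal.coe_inv]

lemma cauchyMeasure_absolutelyContinuous (x₀ : ℝ) {γ : ℝ≥0} (hγ : γ ≠ 0) :
    cauchyMeasure x₀ γ ≪ volume := by
  rw [cauchyMeasure_of_scale_ne_zero x₀ hγ]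
  exact withDensity_absolutelyContinuous _ _

section TwoSidedExponential

variable {a b : ℂ}

lemma exp_mul_sub_mul_abs_of_nonpos {v : ℝ} (hv : v ≤ 0) :
    Complex.exp (b * v - a * |v|) = Complex.exp ((b + a) * v) := by
  rw [abs_of_nonpos hv, Complex.ofReal_neg]
  ring_nf

lemma exp_mul_sub_mul_abs_of_nonneg {v : ℝ} (hv : 0 ≤ v) :
    Complex.exp (b * v - a * |v|) = Complex.exp ((b - a) * v) := by
  rw [abs_of_nonneg hv]
  ring_nf

lemma integrableOn_Iic_exp_mul_sub_mul_abs (hab : 0 < (b + a).re) :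
    IntegrableOn (fun v : ℝ => Complex.exp (b * v - a * |v|)) (Set.Iic 0) :=
  (integrableOn_exp_mul_complex_Iic hab 0).congr_fun
    (fun _ hv => (exp_mul_sub_mul_abs_of_nonpos hv).symm) measurableSet_Iic

lemma integrableOn_Ioi_exp_mul_sub_mul_abs (hab : (b - a).re < 0) :
    IntegrableOn (fun v : ℝ => Complex.exp (b * v - a * |v|)) (Set.Ioi 0) :=
  (integrableOn_exp_mul_complex_Ioi hab 0).congr_fun
    (fun _ hv => (exp_mul_sub_mul_abs_of_nonneg (Set.mem_Ioi.mp hv).le).symm) measurableSet_Ioi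

lemma integrable_exp_mul_sub_mul_abs (hab : |b.re| < a.re) :
    Integrable fun v : ℝ => Complex.exp (b * v - a * |v|) := by
  obtain ⟨hneg, hpos⟩ := abs_lt.mp hab
  rw [← integrableOn_univ, ← Set.Iic_union_Ioi (a := (0 : ℝ))]
  refine (integrableOn_Iic_exp_mul_sub_mul_abs ?_).union (integrableOn_Ioi_exp_mul_sub_mul_abs ?_)
  · rw [Complex.add_re]; linarith
  · rw [Complex.sub_re]; linarith

lemma integral_exp_mul_sub_mul_abs (hab : |b.re| < a.re) :
    ∫ v : ℝ, Complex.exp (b * v - a * |v|) = 2 * a / (a ^ 2 - b ^ 2) := by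
  obtain ⟨hneg, hpos⟩ := abs_lt.mp hab
  have hadd : 0 < (b + a).re := by rw [Complex.add_re]; linarith
  have hsub : (b - a).re < 0 := by rw [Complex.sub_re]; linarith
  have hadd_ne : b + a ≠ 0 := fun h => hadd.ne' (by rw [h, Complex.zero_re])
  have hsub_ne : b - a ≠ 0 := fun h => hsub.ne (by rw [h, Complex.zero_re])
  calc ∫ v : ℝ, Complex.exp (b * v - a * |v|)
      = (∫ v : ℝ in Set.Iic 0, Complex.exp (b * v - a * |v|)) +
          ∫ v : ℝ in Set.Ioi 0, Complex.exp (b * v - a * |v|) :=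
        (intervalIntegral.integral_Iic_add_Ioi (integrableOn_Iic_exp_mul_sub_mul_abs hadd)
          (integrableOn_Ioi_exp_mul_sub_mul_abs hsub)).symm
    _ = (∫ v : ℝ in Set.Iic 0, Complex.exp ((b + a) * v)) +
          ∫ v : ℝ in Set.Ioi 0, Complex.exp ((b - a) * v) := by
        congr 1
        · exact setIntegral_congr_fun measurableSet_Iic fun _ hv =>
            exp_mul_sub_mul_abs_of_nonpos hv
        · exact setIntegral_congr_fun measurableSet_Ioi fun _ hv =>
            exp_mul_sub_mul_abs_of_nonneg (Set.mem_Ioi.mp hv).le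
    _ = 1 / (b + a) - 1 / (b - a) := by
        rw [integral_exp_mul_complex_Iic hadd, integral_exp_mul_complex_Ioi hsub]
        simp only [Complex.ofReal_zero, mul_zero, Complex.exp_zero, neg_div, sub_eq_add_neg]
    _ = 2 * a / (a ^ 2 - b ^ 2) := by
        rw [show a ^ 2 - b ^ 2 = -((b + a) * (b - a)) by ring]
        field

end TwoSidedExponential

section CharFun

lemma fourier_exp_neg_mul_abs {γ : ℝ≥0} (hγ : γ ≠ 0) :
    𝓕 (fun v : ℝ => Complex.exp (-(2 * π * γ * |v|))) =
      fun w => (cauchyPDFReal 0 γ w : ℂ) := by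
  ext w
  have hre : |(-(2 * π * w) * Complex.I).re| < (2 * π * γ : ℂ).re := by
    norm_cast
    simpa using by positivity
  calc 𝓕 (fun v : ℝ => Complex.exp (-(2 * π * γ * |v|))) w
      = ∫ v : ℝ, Complex.exp (-(2 * π * w) * Complex.I * v - 2 * π * γ * |v|) := by
        rw [Real.fourier_real_eq_integral_exp_smul]
        congr with v
        rw [smul_eq_mul, ← Complex.exp_add]
        push_cast
        ring_nf
    _ = 2 * (2 * π * γ) / ((2 * π * γ) ^ 2 - (-(2 * π * w) * Complex.I) ^ 2) :=
        integral_exp_mul_sub_mul_abs hre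
    _ = cauchyPDFReal 0 γ w := by
        have hden : ((w : ℂ) ^ 2 + γ ^ 2) ≠ 0 := by
          exact_mod_cast (by positivity : w ^ 2 + (γ : ℝ) ^ 2 ≠ 0)
        rw [cauchyPDFReal_def, sub_zero, mul_pow _ Complex.I, Complex.I_sq,
          show (2 * π * γ : ℂ) ^ 2 - (-(2 * π * w)) ^ 2 * -1 = 4 * π ^ 2 * (w ^ 2 + γ ^ 2) by ring]
        push_cast
        field

lemma integral_cauchyMeasure {E : Type*} [NormedAddCommGroup E] [NormedSpace ℝ E]
    (x₀ : ℝ) {γ : ℝ≥0} (hγ : γ ≠ 0) (f : ℝ → E) :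
    ∫ x, f x ∂cauchyMeasure x₀ γ = ∫ x, cauchyPDFReal x₀ γ x • f x := by
  rw [cauchyMeasure_of_scale_ne_zero x₀ hγ,
    integral_withDensity_eq_integral_toReal_smul (measurable_cauchyPDF x₀ γ)
      (ae_of_all _ fun _ => ENNReal.ofReal_lt_top)]
  congr with x
  rw [cauchyPDF_def, ENNReal.toReal_ofReal (cauchyPDF_pos x₀ hγ x).le]

lemma charFun_cauchyMeasure_zero {γ : ℝ≥0} (hγ : γ ≠ 0) (t : ℝ) :
    charFun (cauchyMeasure 0 γ) t = Complex.exp (-(γ * |t|)) := by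
  have hcont : Continuous fun v : ℝ => Complex.exp (-(2 * π * γ * |v|)) := by fun_prop
  have hint : Integrable fun v : ℝ => Complex.exp (-(2 * π * γ * |v|)) := by
    simpa using integrable_exp_mul_sub_mul_abs (a := 2 * π * γ) (b := 0)
      (by norm_cast; simpa using by positivity)
  have hint_fourier : Integrable (𝓕 fun v : ℝ => Complex.exp (-(2 * π * γ * |v|))) := by
    rw [fourier_exp_neg_mul_abs hγ]
    exact (integrable_cauchyPDFReal 0).ofReal
  calc charFun (cauchyMeasure 0 γ) t
      = 𝓕⁻ (fun w => (cauchyPDFReal 0 γ w : ℂ)) (t / (2 * π)) := by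
        rw [charFun_apply_real, integral_cauchyMeasure 0 hγ, Real.fourierInv_eq']
        congr with x
        rw [Complex.real_smul, smul_eq_mul, mul_comm]
        congr 3
        norm_cast
        rw [RCLike.inner_apply, conj_trivial]
        field
    _ = Complex.exp (-(2 * π * γ * |t / (2 * π)|)) := by
        rw [← fourier_exp_neg_mul_abs hγ, hcont.fourierInv_fourier_eq hint hint_fourier]
    _ = Complex.exp (-(γ * |t|)) := by
        rw [abs_div, abs_of_pos two_pi_pos]
        push_cast
        congr 2
        field

lemma charFun_cauchyMeasure (x₀ : ℝ) (γ : ℝ≥0) (t : ℝ) :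
    charFun (cauchyMeasure x₀ γ) t = Complex.exp (t * x₀ * Complex.I - γ * |t|) := by
  rcases eq_or_ne γ 0 with rfl | hγ
  · simp
  calc charFun (cauchyMeasure x₀ γ) t
      = ∫ x, cauchyPDFReal x₀ γ (x + x₀) • Complex.exp (t * ↑(x + x₀) * Complex.I) := by
        rw [charFun_apply_real, integral_cauchyMeasure x₀ hγ]
        exact (integral_add_right_eq_self
          (fun x => cauchyPDFReal x₀ γ x • Complex.exp (t * x * Complex.I)) x₀).symm
    _ = ∫ x, Complex.exp (t * x₀ * Complex.I) *
          (cauchyPDFReal 0 γ x • Complex.exp (t * x * Complex.I)) := by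
        congr with x
        rw [cauchyPDFReal_def, cauchyPDFReal_def, add_sub_cancel_right, sub_zero,
          mul_smul_comm, ← Complex.exp_add]
        push_cast
        ring_nf
    _ = Complex.exp (t * x₀ * Complex.I) * charFun (cauchyMeasure 0 γ) t := by
        rw [integral_const_mul, charFun_apply_real, integral_cauchyMeasure 0 hγ]
    _ = Complex.exp (t * x₀ * Complex.I - γ * |t|) := by
        rw [charFun_cauchyMeasure_zero hγ, ← Complex.exp_add, sub_eq_add_neg]

lemma map_const_mul_cauchyMeasure (c x₀ : ℝ) (γ : ℝ≥0) :
    (cauchyMeasure x₀ γ).map (c * ·) = cauchyMeasure (c * x₀) (‖c‖₊ * γ) := by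
  have : IsProbabilityMeasure ((cauchyMeasure x₀ γ).map (c * ·)) :=
    Measure.isProbabilityMeasure_map (by fun_prop)
  refine Measure.ext_of_charFun (funext fun t => ?_)
  rw [charFun_map_mul, charFun_cauchyMeasure, charFun_cauchyMeasure, abs_mul]
  push_cast [coe_nnnorm, Real.norm_eq_abs]
  ring_nf

lemma cauchyMeasure_conv_cauchyMeasure (x₁ x₂ : ℝ) (γ₁ γ₂ : ℝ≥0) :
    cauchyMeasure x₁ γ₁ ∗ cauchyMeasure x₂ γ₂ = cauchyMeasure (x₁ + x₂) (γ₁ + γ₂) := by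
  refine Measure.ext_of_charFun (funext fun t => ?_)
  simp_rw [charFun_conv, charFun_cauchyMeasure, ← Complex.exp_add]
  push_cast
  ring_nf

end CharFun

section Inversion

lemma ofReal_abs_deriv_inv_mul_cauchyPDF_inv (γ : ℝ≥0) {x : ℝ} (hx : x ≠ 0) :
    ENNReal.ofReal |-(x ^ 2)⁻¹| * cauchyPDF 0 γ x⁻¹ = cauchyPDF 0 γ⁻¹ x := by
  rcases eq_or_ne γ 0 with rfl | hγ
  · simp
  rw [cauchyPDF_def, cauchyPDF_def, ← ENNReal.ofReal_mul (abs_nonneg _), abs_neg,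
    abs_of_pos (by positivity), cauchyPDFReal_def, cauchyPDFReal_def, NNReal.coe_inv]
  congr 1
  field

lemma map_inv_cauchyMeasure (γ : ℝ≥0) :
    (cauchyMeasure 0 γ).map (·⁻¹) = cauchyMeasure 0 γ⁻¹ := by
  rcases eq_or_ne γ 0 with rfl | hγ
  · simp [Measure.map_dirac' measurable_inv]
  ext s hs
  rw [Measure.map_apply measurable_inv hs, cauchyMeasure_of_scale_ne_zero 0 hγ,
    cauchyMeasure_of_scale_ne_zero 0 (inv_ne_zero hγ), withDensity_apply _ (measurable_inv hs),
    withDensity_apply _ hs]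
  have hinv_image : (fun x : ℝ => x⁻¹) '' (s \ {0}) = (fun x : ℝ => x⁻¹) ⁻¹' s \ {0} := by
    ext x
    simp only [Set.image_inv_eq_inv, Set.mem_inv, Set.mem_sdiff, Set.mem_singleton_iff,
      inv_eq_zero, Set.mem_preimage]
  have hs_diff : MeasurableSet (s \ {0}) := hs.diff (measurableSet_singleton 0)
  calc ∫⁻ x in (fun x : ℝ => x⁻¹) ⁻¹' s, cauchyPDF 0 γ x
      = ∫⁻ x in (fun x : ℝ => x⁻¹) '' (s \ {0}), cauchyPDF 0 γ x := by
        rw [hinv_image]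
        exact (setLIntegral_congr (sdiff_null_ae_eq_self (measure_singleton 0))).symm
    _ = ∫⁻ x in s \ {0}, ENNReal.ofReal |-(x ^ 2)⁻¹| * cauchyPDF 0 γ x⁻¹ :=
        lintegral_image_eq_lintegral_abs_deriv_mul hs_diff
          (fun _ hx => hasDerivWithinAt_inv hx.2 _) inv_injective.injOn _
    _ = ∫⁻ x in s \ {0}, cauchyPDF 0 γ⁻¹ x :=
        setLIntegral_congr_fun hs_diff fun _ hx =>
          ofReal_abs_deriv_inv_mul_cauchyPDF_inv γ hx.2
    _ = ∫⁻ x in s, cauchyPDF 0 γ⁻¹ x :=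
        setLIntegral_congr (sdiff_null_ae_eq_self (measure_singleton 0))

lemma measurePreserving_inv_cauchyMeasure (γ : ℝ≥0) :
    MeasurePreserving (·⁻¹) (cauchyMeasure 0 γ) (cauchyMeasure 0 γ⁻¹) :=
  ⟨measurable_inv, map_inv_cauchyMeasure γ⟩

end Inversion

section LogMoment

lemma cauchyPDFReal_le (x₀ : ℝ) (γ : ℝ≥0) (x : ℝ) : cauchyPDFReal x₀ γ x ≤ (π * γ)⁻¹ := by
  rw [cauchyPDFReal_def', mul_inv]
  exact mul_le_of_le_one_right (by positivity)
    (inv_le_one_of_one_le₀ (le_add_of_nonneg_right (sq_nonneg _)))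

lemma cauchyMeasure_le_smul_volume (x₀ : ℝ) {γ : ℝ≥0} (hγ : γ ≠ 0) :
    cauchyMeasure x₀ γ ≤ ENNReal.ofReal (π * γ)⁻¹ • volume := by
  rw [cauchyMeasure_of_scale_ne_zero x₀ hγ, ← withDensity_const]
  exact withDensity_mono (ae_of_all _ fun x => ENNReal.ofReal_le_ofReal (cauchyPDFReal_le x₀ γ x))

lemma integrableOn_log_Icc_cauchyMeasure (x₀ : ℝ) {γ : ℝ≥0} (hγ : γ ≠ 0) :
    IntegrableOn Real.log (Set.Icc (-1) 1) (cauchyMeasure x₀ γ) := by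
  have hvolume : IntegrableOn Real.log (Set.Icc (-1) 1) := by
    rw [← intervalIntegrable_iff_integrableOn_Icc_of_le (by norm_num)]
    exact intervalIntegral.intervalIntegrable_log'
  refine IntegrableOn.mono_measure ?_ (cauchyMeasure_le_smul_volume x₀ hγ)
  rw [IntegrableOn, Measure.restrict_smul]
  exact hvolume.smul_measure ENNReal.ofReal_ne_top

-- Inversion swaps `[-1, 1]` with its complement and flips the sign of `log`, so integrability of
-- `log` at infinity follows from its integrability at the origin.
lemma integrable_log_cauchyMeasure {γ : ℝ≥0} (hγ : γ ≠ 0) :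
    Integrable Real.log (cauchyMeasure 0 γ) := by
  have hlog_inv : IntegrableOn (Real.log ∘ (·⁻¹)) ((·⁻¹) ⁻¹' Set.Icc (-1) 1) (cauchyMeasure 0 γ) :=
    ((measurePreserving_inv_cauchyMeasure γ).integrableOn_comp_preimage
      (MeasurableEquiv.inv ℝ).measurableEmbedding).mpr
      (integrableOn_log_Icc_cauchyMeasure 0 (inv_ne_zero hγ))
  have hfar : IntegrableOn Real.log ((·⁻¹) ⁻¹' Set.Icc (-1) 1) (cauchyMeasure 0 γ) :=
    hlog_inv.neg.congr_fun
      (fun x _ => by rw [Pi.neg_apply, Function.comp_apply, Real.log_inv, neg_neg])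
      (measurable_inv measurableSet_Icc)
  rw [← integrableOn_univ]
  refine ((integrableOn_log_Icc_cauchyMeasure 0 hγ).union hfar).mono_set fun x _ => ?_
  simp only [Set.mem_union, Set.mem_preimage, Set.mem_Icc, ← abs_le, abs_inv]
  exact (le_total |x| 1).imp_right inv_le_one_of_one_le₀

lemma integral_log_cauchyMeasure_zero_one : ∫ x, Real.log x ∂cauchyMeasure 0 1 = 0 := by
  have hinv : ∫ x, Real.log x⁻¹ ∂cauchyMeasure 0 1 = ∫ x, Real.log x ∂cauchyMeasure 0 1 := by
    simpa only [inv_one] using (measurePreserving_inv_cauchyMeasure 1).integral_comp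
      (MeasurableEquiv.inv ℝ).measurableEmbedding Real.log
  simp_rw [Real.log_inv, integral_neg] at hinv
  linarith

lemma integral_log_cauchyMeasure (γ : ℝ≥0) :
    ∫ x, Real.log x ∂cauchyMeasure 0 γ = Real.log γ := by
  rcases eq_or_ne γ 0 with rfl | hγ
  · simp
  have hscale : cauchyMeasure 0 γ = (cauchyMeasure 0 1).map ((γ : ℝ) * ·) := by
    rw [map_const_mul_cauchyMeasure, mul_zero, mul_one, NNReal.nnnorm_eq]
  have hne_zero : ∀ᵐ x ∂cauchyMeasure 0 1, x ≠ 0 :=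
    (cauchyMeasure_absolutelyContinuous 0 one_ne_zero).ae_le (Measure.ae_ne volume 0)
  calc ∫ x, Real.log x ∂cauchyMeasure 0 γ
      = ∫ x, Real.log (γ * x) ∂cauchyMeasure 0 1 := by
        rw [hscale, integral_map (by fun_prop) measurable_log.aestronglyMeasurable]
    _ = ∫ x, (Real.log γ + Real.log x) ∂cauchyMeasure 0 1 := by
        refine integral_congr_ae ?_
        filter_upwards [hne_zero] with x hx
        exact Real.log_mul (NNReal.coe_ne_zero.mpr hγ) hx
    _ = Real.log γ := by
        rw [integral_add (integrable_const _) (integrable_log_cauchyMeasure one_ne_zero),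
          integral_log_cauchyMeasure_zero_one, add_zero, integral_const, probReal_univ, one_smul]

end LogMoment

section RandomVariable

variable {Ω : Type*} [MeasurableSpace Ω] {P : Measure Ω} {X ε : Ω → ℝ} {γ δ : ℝ≥0}

lemma map_neg_one_div_add_const_mul_eq_cauchyMeasure (hXm : AEMeasurable X P)
    (hεm : AEMeasurable ε P) (hindep : IndepFun X ε P) (hX : P.map X = cauchyMeasure 0 γ)
    (hε : P.map ε = cauchyMeasure 0 δ) (ξ : ℝ) :
    P.map (fun ω => -(1 / X ω) + ξ * ε ω) = cauchyMeasure 0 (γ⁻¹ + ‖ξ‖₊ * δ) := by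
  have hX_neg_inv : P.map (fun ω => -(1 / X ω)) = cauchyMeasure 0 γ⁻¹ := by
    have hcomp : (fun ω => -(1 / X ω)) = (-1 * ·) ∘ (·⁻¹) ∘ X := by
      ext ω
      simp
    rw [hcomp, ← AEMeasurable.map_map_of_aemeasurable (by fun_prop) (by fun_prop),
      ← AEMeasurable.map_map_of_aemeasurable (by fun_prop) hXm, hX, map_inv_cauchyMeasure,
      map_const_mul_cauchyMeasure, mul_zero, nnnorm_neg, nnnorm_one, one_mul]
  have hε_mul : P.map (fun ω => ξ * ε ω) = cauchyMeasure 0 (‖ξ‖₊ * δ) := by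
    rw [← Function.comp_def (ξ * ·) ε, ← AEMeasurable.map_map_of_aemeasurable (by fun_prop) hεm,
      hε, map_const_mul_cauchyMeasure, mul_zero]
  have hindep_terms : IndepFun (fun ω => -(1 / X ω)) (fun ω => ξ * ε ω) P :=
    hindep.comp (φ := fun x => -(1 / x)) (ψ := (ξ * ·)) (by fun_prop) (by fun_prop)
  calc P.map (fun ω => -(1 / X ω) + ξ * ε ω)
      = P.map (fun ω => -(1 / X ω)) ∗ P.map (fun ω => ξ * ε ω) :=
        hindep_terms.map_add_eq_map_conv_map₀' (by fun_prop) (by fun_prop)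
          (by rw [hX_neg_inv]; infer_instance) (by rw [hε_mul]; infer_instance)
    _ = cauchyMeasure 0 (γ⁻¹ + ‖ξ‖₊ * δ) := by
        rw [hX_neg_inv, hε_mul, cauchyMeasure_conv_cauchyMeasure, add_zero]

lemma integral_log_abs_of_map_eq_cauchyMeasure (hXm : AEMeasurable X P)
    (hX : P.map X = cauchyMeasure 0 γ) : ∫ ω, Real.log |X ω| ∂P = Real.log γ := by
  simp_rw [Real.log_abs]
  rw [← integral_log_cauchyMeasure γ, ← hX,
    integral_map hXm measurable_log.aestronglyMeasurable]

end RandomVariable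

section FixedPoint

lemma add_sqrt_sq_add_four_div_two_pos (a : ℝ) : 0 < (a + √(a ^ 2 + 4)) / 2 := by
  have hlt : |a| < √(a ^ 2 + 4) := Real.lt_sqrt_of_sq_lt (by rw [sq_abs]; linarith)
  linarith [neg_abs_le a]

lemma eq_one_div_add_iff_of_pos {γ : ℝ} (hγ : 0 < γ) (a : ℝ) :
    γ = 1 / γ + a ↔ γ = (a + √(a ^ 2 + 4)) / 2 := by
  have hsqrt : √(a ^ 2 + 4) ^ 2 = a ^ 2 + 4 := Real.sq_sqrt (by positivity)
  have hfactor : γ ^ 2 - a * γ - 1 =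
      (γ - (a + √(a ^ 2 + 4)) / 2) * (γ + (-a + √((-a) ^ 2 + 4)) / 2) := by
    rw [neg_sq]
    linear_combination hsqrt / 4
  have hcofactor := add_pos hγ (add_sqrt_sq_add_four_div_two_pos (-a))
  calc γ = 1 / γ + a ↔ γ ^ 2 - a * γ - 1 = 0 := by
        field_simp
        constructor <;> intro h <;> linarith
    _ ↔ γ = (a + √(a ^ 2 + 4)) / 2 := by
        rw [hfactor, mul_eq_zero, or_iff_left hcofactor.ne', sub_eq_zero]

end FixedPoint

/-- For `ξ ≠ 0` and `γ = (|ξ| + √(ξ² + 4))/2`: `γ` is the unique positive solution of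
`γ = 1/γ + |ξ|`; consequently, if `X ~ Cauchy(0, γ)` and `ε ~ Cauchy(0, 1)` are
independent, then `−1/X + ξ·ε ~ X` and the Lyapunov exponent is
`E[log |X|] = log((|ξ| + √(ξ² + 4))/2)`. -/
theorem cauchy_lyapunov_exponent
    {Ω : Type*} [MeasureSpace Ω] [IsProbabilityMeasure (ℙ : Measure Ω)]
    (ξ : ℝ) (hξ : ξ ≠ 0)
    (X ε : Ω → ℝ) (hXm : Measurable X) (hεm : Measurable ε)
    (hindep : IndepFun X ε ℙ)
    (hX : Measure.map X ℙ = cauchyDist 0 ((|ξ| + Real.sqrt (ξ ^ 2 + 4)) / 2))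
    (hε : Measure.map ε ℙ = cauchyDist 0 1) :
    (0 < (|ξ| + Real.sqrt (ξ ^ 2 + 4)) / 2 ∧
      (|ξ| + Real.sqrt (ξ ^ 2 + 4)) / 2 =
        1 / ((|ξ| + Real.sqrt (ξ ^ 2 + 4)) / 2) + |ξ| ∧
      ∀ γ' : ℝ, 0 < γ' → γ' = 1 / γ' + |ξ| → γ' = (|ξ| + Real.sqrt (ξ ^ 2 + 4)) / 2) ∧
    Measure.map (fun ω => -(1 / X ω) + ξ * ε ω) ℙ = Measure.map X ℙ ∧
    ∫ ω, Real.log |X ω| ∂ℙ = Real.log ((|ξ| + Real.sqrt (ξ ^ 2 + 4)) / 2) := by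
  rw [← sq_abs ξ] at hX ⊢
  have hγ_pos := add_sqrt_sq_add_four_div_two_pos |ξ|
  have hγ_fixed := (eq_one_div_add_iff_of_pos hγ_pos |ξ|).mpr rfl
  have hγ_unique : ∀ γ' : ℝ, 0 < γ' → γ' = 1 / γ' + |ξ| → γ' = (|ξ| + √(|ξ| ^ 2 + 4)) / 2 :=
    fun γ' hγ' => (eq_one_div_add_iff_of_pos hγ' |ξ|).mp
  refine ⟨⟨hγ_pos, hγ_fixed, hγ_unique⟩, ?_⟩
  clear hγ_unique
  lift (|ξ| + √(|ξ| ^ 2 + 4)) / 2 to ℝ≥0 using hγ_pos.le with γ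
  have hX_cauchy : Measure.map X ℙ = cauchyMeasure 0 γ := by
    rw [hX, cauchyDist_eq_cauchyMeasure 0 (NNReal.coe_pos.mp hγ_pos).ne']
  have hε_cauchy : Measure.map ε ℙ = cauchyMeasure 0 1 := by
    rw [hε, ← NNReal.coe_one, cauchyDist_eq_cauchyMeasure 0 one_ne_zero]
  have hscale : γ⁻¹ + ‖ξ‖₊ * 1 = γ := by
    ext
    simpa using hγ_fixed.symm
  refine ⟨?_, integral_log_abs_of_map_eq_cauchyMeasure hXm.aemeasurable hX_cauchy⟩
  rw [map_neg_one_div_add_const_mul_eq_cauchyMeasure hXm.aemeasurable hεm.aemeasurable hindep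
    hX_cauchy hε_cauchy, hscale, hX_cauchy]
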